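/- arXiv:1609.08062 — 5 statements merged into one kernel-verified Lean document; each statement's English description precedes it below -/
import Mathlib

section
/- Every element of the n-qubit Pauli group P_n can be written uniquely in the normal form i^λ • (X^a * Z^b) with λ ∈ ZMod 4 and a, b : Fin n → ZMod 2; consequently P_n is finite of cardinality 4^(n+1). -/
/-!
The operators `X^a` and `Z^b` have explicit entries: `X^a` is the permutation matrix of the
translation `v ↦ a + v` of `𝔽₂ⁿ`, and `Z^b` is diagonal with entries the character
`χ_b(v) = (-1)^(b·v)`. Both depend multiplicatively on their exponent vector, so they can be read
off from the generators (`XpowVec_eq`, `ZpowVec_eq`), and they commute up to the sign `χ_b(a)`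
(`signChar_smul_comm`). As signs are powers of `i`, the normal forms are closed under products and
inverses, hence exhaust the Pauli group (`exists_normalForm`).

Uniqueness (`normalForm_injective`): row `0` of `i^λ • X^a Z^b` is supported at column `a`, which
determines `a`. The nonzero entries are then the values of `i^λ χ_b`, whose value at `0` gives `λ`
and whose values at the basis vectors give `b`. Every normal form is a product of generators
(`exists_mem_of_normalForm`), so the Pauli group is in bijection with
`ℤ/4 × 𝔽₂ⁿ × 𝔽₂ⁿ`.
-/

open Matrix Complex
open scoped Classical

noncomputable section

/-- The space of `n`-qubit operators. -/
abbrev MatN (n : ℕ) : Type := Matrix (Fin n → Fin 2) (Fin n → Fin 2) ℂ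

/-- The Pauli matrix `X`. -/
def PX : Matrix (Fin 2) (Fin 2) ℂ := !![0, 1; 1, 0]

/-- The Pauli matrix `Z`. -/
def PZ : Matrix (Fin 2) (Fin 2) ℂ := !![1, 0; 0, -1]

/-- The single-qubit operator `M` acting on the tensor factor `q` and as the identity on
all other factors. -/
def actQ {Q : Type*} (q : Q) (M : Matrix (Fin 2) (Fin 2) ℂ) :
    Matrix (Q → Fin 2) (Q → Fin 2) ℂ :=
  fun v w => M (v q) (w q) * (if ∀ k, k ≠ q → v k = w k then 1 else 0)

/-- The Pauli `X` operator on the `j`-th qubit. -/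
def Xop (n : ℕ) (j : Fin n) : MatN n := actQ j PX

/-- The Pauli `Z` operator on the `j`-th qubit. -/
def Zop (n : ℕ) (j : Fin n) : MatN n := actQ j PZ

/-- Generators of the Pauli group: `i • 1` and all `X_j`, `Z_j` (as units of the matrix ring). -/
def pauliGens (n : ℕ) : Set (MatN n)ˣ :=
  {u | (u : MatN n) = Complex.I • 1 ∨ (∃ j, (u : MatN n) = Xop n j) ∨
    ∃ j, (u : MatN n) = Zop n j}

/-- The `n`-qubit Pauli group `P_n`: the subgroup of the units of the matrix ring generated by
`i • 1` together with all `X_j` and `Z_j`. -/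
def PauliGroup (n : ℕ) : Subgroup (MatN n)ˣ := Subgroup.closure (pauliGens n)

/-- `X^a = ∏ⱼ X_j^(a_j)` for `a : Fin n → ZMod 2`. -/
def XpowVec (n : ℕ) (a : Fin n → ZMod 2) : MatN n :=
  (List.ofFn fun j => Xop n j ^ (a j).val).prod

/-- `Z^b = ∏ⱼ Z_j^(b_j)` for `b : Fin n → ZMod 2`. -/
def ZpowVec (n : ℕ) (b : Fin n → ZMod 2) : MatN n :=
  (List.ofFn fun j => Zop n j ^ (b j).val).prod

/-! ### Translations and characters of `𝔽₂ⁿ` -/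

/-- Translation by `a` on the index set of the computational basis, `Fin 2` being identified with
`ZMod 2`. -/
def shift {n : ℕ} (a : Fin n → ZMod 2) (v : Fin n → Fin 2) : Fin n → Fin 2 :=
  fun j => HAdd.hAdd (α := ZMod 2) (β := ZMod 2) (γ := ZMod 2) (a j) (v j)

/-- The sign `(-1)^(b·v)`. -/
def signChar {n : ℕ} (b : Fin n → ZMod 2) (v : Fin n → Fin 2) : ℂ :=
  ∏ j, (-1) ^ ((b j).val * (v j).val)

/-- The permutation matrix of the translation by `a`. -/
def shiftMat {n : ℕ} (a : Fin n → ZMod 2) : MatN n :=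
  fun v w => if w = shift a v then 1 else 0

/-- The diagonal matrix of the character `(-1)^(b·v)`. -/
def signMat {n : ℕ} (b : Fin n → ZMod 2) : MatN n := Matrix.diagonal (signChar b)

section

variable {n : ℕ}

lemma shift_add (a c : Fin n → ZMod 2) (v : Fin n → Fin 2) :
    shift (a + c) v = shift c (shift a v) := by
  funext j
  simp only [shift, Pi.add_apply]
  generalize a j = x
  generalize c j = y
  generalize v j = z
  revert x y z
  decide

lemma shift_zero (v : Fin n → Fin 2) : shift 0 v = v := by
  funext j
  exact zero_add (M := ZMod 2) (v j)

lemma shift_apply_zero (a : Fin n → ZMod 2) : shift a 0 = a := by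
  funext j
  exact add_zero (M := ZMod 2) (a j)

lemma shift_self (a : Fin n → ZMod 2) (v : Fin n → Fin 2) : shift a (shift a v) = v := by
  rw [← shift_add, ZModModule.add_self, shift_zero]

lemma signChar_add (b d : Fin n → ZMod 2) (v : Fin n → Fin 2) :
    signChar (b + d) v = signChar b v * signChar d v := by
  simp only [signChar, ← Finset.prod_mul_distrib, Pi.add_apply]
  refine Finset.prod_congr rfl fun j _ => ?_
  generalize b j = x
  generalize d j = y
  generalize v j = z
  rw [← pow_add, neg_one_pow_eq_pow_mod_two, neg_one_pow_eq_pow_mod_two (n := _ + _)]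
  congr 1
  revert x y z
  decide

lemma signChar_shift (b a : Fin n → ZMod 2) (v : Fin n → Fin 2) :
    signChar b (shift a v) = signChar b a * signChar b v := by
  simp only [signChar, ← Finset.prod_mul_distrib, shift]
  refine Finset.prod_congr rfl fun j _ => ?_
  generalize b j = x
  generalize a j = y
  generalize v j = z
  rw [← pow_add, neg_one_pow_eq_pow_mod_two, neg_one_pow_eq_pow_mod_two (n := _ + _)]
  congr 1
  revert x y z
  decide

lemma signChar_zero_left (v : Fin n → Fin 2) : signChar 0 v = 1 := by
  simp [signChar]

lemma signChar_zero_right (b : Fin n → ZMod 2) : signChar b 0 = 1 := by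
  simp [signChar]

lemma signChar_single_right (b : Fin n → ZMod 2) (j : Fin n) :
    signChar b (Pi.single j 1) = (-1) ^ (b j).val := by
  rw [signChar, Finset.prod_eq_single j]
  · simp
  · intro k _ hk
    simp [hk]
  · simp

lemma signChar_single_left (j : Fin n) (x : ZMod 2) (v : Fin n → Fin 2) :
    signChar (Pi.single j x) v = (-1) ^ (x.val * (v j).val) := by
  rw [signChar, Finset.prod_eq_single j]
  · simp
  · intro k _ hk
    simp [hk]
  · simp

lemma signChar_eq_one_or (b : Fin n → ZMod 2) (v : Fin n → Fin 2) :
    signChar b v = 1 ∨ signChar b v = -1 := by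
  rw [signChar, Finset.prod_pow_eq_pow_sum]
  exact neg_one_pow_eq_or ℂ _

lemma signChar_ne_zero (b : Fin n → ZMod 2) (v : Fin n → Fin 2) : signChar b v ≠ 0 := by
  rcases signChar_eq_one_or b v with h | h <;> simp [h]

/-! ### Products of translation and sign matrices -/

lemma shiftMat_mul (a c : Fin n → ZMod 2) : shiftMat a * shiftMat c = shiftMat (a + c) := by
  ext v w
  simp only [Matrix.mul_apply, shiftMat, shift_add, mul_ite, mul_one, mul_zero]
  rw [Finset.sum_eq_single (shift a v)]
  · simp
  · intro u _ hu
    simp [hu]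
  · simp

lemma shiftMat_zero : shiftMat (0 : Fin n → ZMod 2) = 1 := by
  ext v w
  simp [shiftMat, shift_zero, Matrix.one_apply, eq_comm]

lemma signMat_mul (b d : Fin n → ZMod 2) : signMat b * signMat d = signMat (b + d) := by
  simp [signMat, Matrix.diagonal_mul_diagonal, signChar_add]

lemma signMat_zero : signMat (0 : Fin n → ZMod 2) = 1 := by
  rw [signMat, show signChar (0 : Fin n → ZMod 2) = fun _ => 1 from funext signChar_zero_left,
    Matrix.diagonal_one]

/-- The commutation relation `Z^b X^a = (-1)^(b·a) X^a Z^b`. -/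
lemma signChar_smul_comm (a b : Fin n → ZMod 2) :
    signMat b * shiftMat a = signChar b a • (shiftMat a * signMat b) := by
  ext v w
  simp only [signMat, Matrix.diagonal_mul, Matrix.smul_apply, Matrix.mul_diagonal, shiftMat,
    smul_eq_mul]
  split_ifs with h
  · subst h
    rw [signChar_shift]
    rcases signChar_eq_one_or b a with h | h <;> simp [h]
  · simp

/-- `a ↦ X^a` as a monoid homomorphism. -/
def shiftHom (n : ℕ) : Multiplicative (Fin n → ZMod 2) →* MatN n where
  toFun a := shiftMat a.toAdd
  map_one' := shiftMat_zero
  map_mul' a c := (shiftMat_mul a.toAdd c.toAdd).symm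

/-- `b ↦ Z^b` as a monoid homomorphism. -/
def charHom (n : ℕ) : Multiplicative (Fin n → ZMod 2) →* MatN n where
  toFun b := signMat b.toAdd
  map_one' := signMat_zero
  map_mul' b d := (signMat_mul b.toAdd d.toAdd).symm

/-! ### Entries of `X^a` and `Z^b` -/

lemma Xop_eq (j : Fin n) : Xop n j = shiftMat (Pi.single j 1) := by
  ext v w
  have key : w = shift (Pi.single j 1) v ↔ w j ≠ v j ∧ ∀ k, k ≠ j → v k = w k := by
    have h2 : ∀ x y : Fin 2, x = HAdd.hAdd (α := ZMod 2) (β := ZMod 2) (γ := ZMod 2) 1 y ↔ x ≠ y := by decide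
    rw [← h2]
    constructor
    · intro h
      have h' := fun k => congrFun h k
      refine ⟨by simpa [shift] using h' j, fun k hk => ?_⟩
      rw [h' k, shift, Pi.single_eq_of_ne hk]
      exact (zero_add (M := ZMod 2) (v k)).symm
    · rintro ⟨h, h'⟩
      funext k
      by_cases hk : k = j
      · subst hk
        simpa [shift] using h
      · rw [← h' k hk, shift, Pi.single_eq_of_ne hk]
        exact (zero_add (M := ZMod 2) (v k)).symm
  have hPX : ∀ x y : Fin 2, PX x y = if y ≠ x then 1 else 0 := by
    intro x y
    fin_cases x <;> fin_cases y <;> simp [PX]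
  simp only [Xop, actQ, shiftMat, key, hPX]
  split_ifs <;> simp_all

lemma Zop_eq (j : Fin n) : Zop n j = signMat (Pi.single j 1) := by
  ext v w
  have hPZ : ∀ x y : Fin 2, PZ x y = if x = y then (-1) ^ x.val else 0 := by
    intro x y
    fin_cases x <;> fin_cases y <;> simp [PZ]
  have key : v = w ↔ v j = w j ∧ ∀ k, k ≠ j → v k = w k := by
    refine ⟨fun h => by simp [h], fun h => funext fun k => ?_⟩
    by_cases hk : k = j
    · exact hk ▸ h.1
    · exact h.2 k hk
  have h1 : (1 : ZMod 2).val = 1 := rfl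
  simp only [Zop, actQ, signMat, Matrix.diagonal_apply, key, hPZ, signChar_single_left, h1,
    one_mul]
  split_ifs <;> simp_all

lemma prod_single (a : Fin n → ZMod 2) :
    (List.ofFn fun j => Multiplicative.ofAdd (Pi.single j (a j) : Fin n → ZMod 2)).prod
      = Multiplicative.ofAdd a := by
  rw [List.prod_ofFn, ← ofAdd_sum, Finset.univ_sum_single]

lemma pow_val_single (f : Multiplicative (Fin n → ZMod 2) →* MatN n) (j : Fin n) (x : ZMod 2) :
    f (Multiplicative.ofAdd (Pi.single j 1)) ^ x.val
      = f (Multiplicative.ofAdd (Pi.single j x)) := by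
  rw [← map_pow, ← ofAdd_nsmul, ← Pi.single_smul', nsmul_one, ZMod.natCast_zmod_val]

lemma XpowVec_eq (a : Fin n → ZMod 2) : XpowVec n a = shiftMat a := by
  have h : ∀ j, Xop n j ^ (a j).val
      = shiftHom n (Multiplicative.ofAdd (Pi.single j (a j))) := fun j => by
    rw [← pow_val_single, Xop_eq]
    rfl
  simp only [XpowVec, h]
  rw [← Function.comp_def (shiftHom n), ← List.map_ofFn, ← map_list_prod, prod_single]
  rfl

lemma ZpowVec_eq (b : Fin n → ZMod 2) : ZpowVec n b = signMat b := by
  have h : ∀ j, Zop n j ^ (b j).val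
      = charHom n (Multiplicative.ofAdd (Pi.single j (b j))) := fun j => by
    rw [← pow_val_single, Zop_eq]
    rfl
  simp only [ZpowVec, h]
  rw [← Function.comp_def (charHom n), ← List.map_ofFn, ← map_list_prod, prod_single]
  rfl

/-! ### Normal forms -/

/-- The operator `i^λ • X^a Z^b`. -/
def normalForm (t : ZMod 4 × (Fin n → ZMod 2) × (Fin n → ZMod 2)) : MatN n :=
  Complex.I ^ (t.1).val • (shiftMat t.2.1 * signMat t.2.2)

lemma normalForm_apply (t : ZMod 4 × (Fin n → ZMod 2) × (Fin n → ZMod 2))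
    (v w : Fin n → Fin 2) :
    normalForm t v w
      = if w = shift t.2.1 v then Complex.I ^ (t.1).val * signChar t.2.2 w else 0 := by
  simp [normalForm, signMat, Matrix.mul_diagonal, shiftMat]

lemma I_pow_val_add (x y : ZMod 4) :
    Complex.I ^ (x + y).val = Complex.I ^ x.val * Complex.I ^ y.val := by
  rw [ZMod.val_add, ← Complex.I_pow_eq_pow_mod, pow_add]

lemma exists_I_pow_eq_signChar (b : Fin n → ZMod 2) (v : Fin n → Fin 2) :
    ∃ e : ZMod 4, Complex.I ^ e.val = signChar b v := by
  rcases signChar_eq_one_or b v with h | h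
  · exact ⟨0, by simp [h]⟩
  · exact ⟨2, by rw [h]; exact Complex.I_sq⟩

lemma normalForm_mul (l m : ZMod 4) (a b c d : Fin n → ZMod 2) :
    normalForm (l, a, b) * normalForm (m, c, d)
      = (Complex.I ^ (l + m).val * signChar b c) • (shiftMat (a + c) * signMat (b + d)) := by
  have h : shiftMat a * signMat b * (shiftMat c * signMat d)
      = signChar b c • (shiftMat (a + c) * signMat (b + d)) := by
    rw [← shiftMat_mul, ← signMat_mul]
    calc shiftMat a * signMat b * (shiftMat c * signMat d)
        = shiftMat a * (signMat b * shiftMat c) * signMat d := by simp only [mul_assoc]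
      _ = _ := by
        rw [signChar_smul_comm]
        simp only [mul_smul_comm, smul_mul_assoc, mul_assoc]
  simp only [normalForm, smul_mul_smul_comm, h, smul_smul, I_pow_val_add]

lemma normalForm_phase (l : ZMod 4) :
    normalForm (l, (0 : Fin n → ZMod 2), 0) = Complex.I ^ l.val • 1 := by
  simp [normalForm, shiftMat_zero, signMat_zero]

lemma exists_normalForm {P : (MatN n)ˣ} (hP : P ∈ PauliGroup n) :
    ∃ t, (P : MatN n) = normalForm t := by
  induction hP using Subgroup.closure_induction with
  | mem u hu =>
    rcases hu with h | ⟨j, h⟩ | ⟨j, h⟩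
    · refine ⟨(1, 0, 0), ?_⟩
      have h1 : (1 : ZMod 4).val = 1 := rfl
      rw [h, normalForm_phase, h1, pow_one]
    · exact ⟨(0, Pi.single j 1, 0), by simp [h, normalForm, Xop_eq, signMat_zero]⟩
    · exact ⟨(0, 0, Pi.single j 1), by simp [h, normalForm, Zop_eq, shiftMat_zero]⟩
  | one => exact ⟨(0, 0, 0), by simp [normalForm_phase]⟩
  | mul u v _ _ hu hv =>
    obtain ⟨⟨l, a, b⟩, hu⟩ := hu
    obtain ⟨⟨m, c, d⟩, hv⟩ := hv
    obtain ⟨e, he⟩ := exists_I_pow_eq_signChar b c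
    refine ⟨(l + m + e, a + c, b + d), ?_⟩
    rw [Units.val_mul, hu, hv, normalForm_mul, ← he, ← I_pow_val_add]
    rfl
  | inv u _ hu =>
    obtain ⟨⟨l, a, b⟩, hu⟩ := hu
    obtain ⟨e, he⟩ := exists_I_pow_eq_signChar b a
    refine ⟨(-l + e, a, b), Units.inv_eq_of_mul_eq_one_right ?_⟩
    -- `X^a Z^b` squares to the sign `(-1)^(b·a)`, which the phase `e` cancels.
    rw [hu, normalForm_mul, add_neg_cancel_left, he, ZModModule.add_self,
      ZModModule.add_self, shiftMat_zero, signMat_zero]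
    rcases signChar_eq_one_or b a with h | h <;> simp [h]

/-! ### Uniqueness -/

lemma I_pow_val_injective : Function.Injective fun l : ZMod 4 => Complex.I ^ l.val := by
  intro l m h
  have hI : orderOf Complex.I = 4 := by
    refine orderOf_eq_prime_pow (p := 2) (n := 1) ?_ ?_
    · norm_num [Complex.ext_iff]
    · norm_num
  refine ZMod.val_injective 4 (pow_injOn_Iio_orderOf ?_ ?_ h) <;>
    simpa [hI] using ZMod.val_lt _

lemma normalForm_injective :
    Function.Injective (normalForm (n := n)) := by
  rintro ⟨l, a, b⟩ ⟨m, c, d⟩ h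
  -- In row `0`, the two sides are supported at the single columns `a` and `c`.
  have hac : a = c := by
    have h0 := congrFun (congrFun h 0) (shift a 0)
    rw [normalForm_apply, normalForm_apply, if_pos rfl] at h0
    by_contra hne
    rw [if_neg (by rw [shift_apply_zero, shift_apply_zero]; exact hne)] at h0
    exact mul_ne_zero (pow_ne_zero _ Complex.I_ne_zero) (signChar_ne_zero _ _) h0
  subst hac
  have hw : ∀ w, Complex.I ^ l.val * signChar b w = Complex.I ^ m.val * signChar d w := by
    intro w
    simpa [normalForm_apply, shift_self] using congrFun (congrFun h (shift a w)) w
  have hlm : Complex.I ^ l.val = Complex.I ^ m.val := by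
    simpa [signChar_zero_right] using hw 0
  have hbd : b = d := by
    funext j
    have hj := hw (Pi.single j 1)
    rw [hlm, signChar_single_right, signChar_single_right] at hj
    have hj' := mul_left_cancel₀ (pow_ne_zero _ Complex.I_ne_zero) hj
    generalize b j = x at hj'
    generalize d j = y at hj'
    fin_cases x <;> fin_cases y <;> first | rfl | (norm_num [ZMod.val] at hj')
  rw [I_pow_val_injective hlm, hbd]

/-! ### Normal forms lie in the Pauli group -/

lemma exists_mem_of_normalForm (t : ZMod 4 × (Fin n → ZMod 2) × (Fin n → ZMod 2)) :
    ∃ P ∈ PauliGroup n, (P : MatN n) = normalForm t := by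
  have lift : ∀ M N : MatN n, M * N = 1 → (∀ u : (MatN n)ˣ, (u : MatN n) = M → u ∈ pauliGens n) →
      ∃ P ∈ PauliGroup n, (P : MatN n) = M := fun M N h hu =>
    ⟨⟨M, N, h, mul_eq_one_comm.mp h⟩, Subgroup.subset_closure (hu _ rfl), rfl⟩
  obtain ⟨ι, hι, hι'⟩ := lift (Complex.I • 1) (-Complex.I • 1)
    (by simp [smul_smul]) fun u h => Or.inl h
  have hX : ∀ j, ∃ P ∈ PauliGroup n, (P : MatN n) = Xop n j := fun j =>
    lift _ (Xop n j) (by rw [Xop_eq, shiftMat_mul, ZModModule.add_self, shiftMat_zero])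
      fun u h => Or.inr (Or.inl ⟨j, h⟩)
  have hZ : ∀ j, ∃ P ∈ PauliGroup n, (P : MatN n) = Zop n j := fun j =>
    lift _ (Zop n j) (by rw [Zop_eq, signMat_mul, ZModModule.add_self, signMat_zero])
      fun u h => Or.inr (Or.inr ⟨j, h⟩)
  choose x hx hx' using hX
  choose z hz hz' using hZ
  have hmem : ∀ (y : Fin n → (MatN n)ˣ) (_ : ∀ j, y j ∈ PauliGroup n) (k : Fin n → ℕ),
      (List.ofFn fun j => y j ^ k j).prod ∈ PauliGroup n := fun y hy k =>
    Subgroup.list_prod_mem _ fun u hu => by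
      obtain ⟨j, rfl⟩ := (List.mem_ofFn' _ _).mp hu
      exact pow_mem (hy j) _
  refine ⟨ι ^ t.1.val * ((List.ofFn fun j => x j ^ (t.2.1 j).val).prod
    * (List.ofFn fun j => z j ^ (t.2.2 j).val).prod),
    mul_mem (pow_mem hι _) (mul_mem (hmem x hx _) (hmem z hz _)), ?_⟩
  have hcoe : ∀ (y : Fin n → (MatN n)ˣ) (k : Fin n → ℕ),
      (((List.ofFn fun j => y j ^ k j).prod : (MatN n)ˣ) : MatN n)
        = (List.ofFn fun j => (y j : MatN n) ^ k j).prod := fun y k => by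
    rw [← Units.coeHom_apply, map_list_prod, List.map_ofFn]
    rfl
  rw [Units.val_mul, Units.val_mul, hcoe, hcoe, Units.val_pow_eq_pow_val, hι']
  simp only [hx', hz']
  rw [normalForm, ← XpowVec_eq, ← ZpowVec_eq, smul_pow, one_pow, smul_mul_assoc, one_mul]
  rfl

end

/-- Every element of the `n`-qubit Pauli group can be written uniquely in the normal form
`i^λ • (X^a * Z^b)`; consequently `P_n` is finite of cardinality `4^(n+1)`. -/
theorem pauli_normal_form_unique_and_card (n : ℕ) (hn : 1 ≤ n) :
    (∀ P ∈ PauliGroup n, ∃! t : ZMod 4 × (Fin n → ZMod 2) × (Fin n → ZMod 2),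
        (P : MatN n) = Complex.I ^ (t.1).val • (XpowVec n t.2.1 * ZpowVec n t.2.2)) ∧
    Nat.card ↥(PauliGroup n) = 4 ^ (n + 1) := by
  constructor
  · intro P hP
    simp only [XpowVec_eq, ZpowVec_eq]
    obtain ⟨t, ht⟩ := exists_normalForm hP
    exact ⟨t, ht, fun s hs => normalForm_injective (hs.symm.trans ht)⟩
  · choose f hf hf' using exists_mem_of_normalForm (n := n)
    have hbij : Function.Bijective fun t => (⟨f t, hf t⟩ : PauliGroup n) := by
      constructor
      · intro s t h
        apply normalForm_injective
        rw [← hf', ← hf', show f s = f t from congrArg Subtype.val h]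
      · rintro ⟨P, hP⟩
        obtain ⟨t, ht⟩ := exists_normalForm hP
        exact ⟨t, Subtype.ext (Units.ext ((hf' t).trans ht.symm))⟩
    rw [← Nat.card_eq_of_bijective _ hbij]
    rw [Nat.card_prod, Nat.card_prod, Nat.card_fun, Nat.card_zmod, Nat.card_zmod, Nat.card_fin,
      ← mul_pow, pow_succ, mul_comm]
    norm_num
end
end

section
/- For P = i^λ • (X^a * Z^b) and Q = i^μ • (X^c * Z^d) in the n-qubit Pauli group, one has P * Q = (-1)^(Σ_j (a_j·d_j + b_j·c_j)) • (Q * P), where the exponent is computed in ZMod 2. In particular, any two elements of P_n either commute or anticommute. -/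
/-!
Two single-qubit operators commute when they act on different tensor factors, and on the same
factor the only nontrivial relation is `Z X = -X Z` (`Xop_Zop`, `Zop_Xop`). Commutation up to a
scalar, `A * B = s • (B * A)`, is multiplicative in each argument (`TwComm.mul_left`,
`TwComm.mul_right`), so scalars multiply along ordered products (`TwComm.prod_ofFn`). Applied to
`X^a` and `Z^d` only the diagonal pairs contribute, giving `∏ⱼ (-1)^(aⱼdⱼ)`; since
`x ↦ (-1)^x` is a character of `ZMod 2`, the total scalar is the symplectic sign.

For the group `P_n`, the elements commuting up to sign with a fixed unit form a subgroup, so it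
is enough to check the relation on pairs of generators.
-/

open Matrix Complex
open scoped Classical

noncomputable section

/-! ### Single-qubit operators -/

/-- Left multiplication by a single-qubit operator only touches the coordinate `q`. -/
lemma actQ_mul_apply {n : ℕ} (q : Fin n) (M : Matrix (Fin 2) (Fin 2) ℂ) (A : MatN n)
    (v w : Fin n → Fin 2) :
    (actQ q M * A) v w = ∑ s, M (v q) s * A (Function.update v q s) w := by
  rw [Matrix.mul_apply]
  symm
  -- The nonzero terms of the matrix product are those indexed by `Function.update v q s`.
  refine Finset.sum_of_injOn (fun s => Function.update v q s)
    (fun s _ t _ h => Function.update_injective v q h) (by simp [Set.MapsTo]) ?_ ?_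
  · intro u _ hu
    have : ¬ ∀ k, k ≠ q → v k = u k := by
      intro h
      apply hu
      refine ⟨u q, by simp, ?_⟩
      funext k
      by_cases hk : k = q
      · subst hk; simp
      · simp [hk, h k hk]
    simp only [actQ, if_neg this, mul_zero, zero_mul]
  · intro s _
    have : ∀ k, k ≠ q → v k = Function.update v q s k := by
      intro k hk
      simp [hk]
    simp only [actQ, if_pos this, Function.update_self, mul_one]

lemma actQ_mul_actQ {n : ℕ} (q : Fin n) (M N : Matrix (Fin 2) (Fin 2) ℂ) :
    actQ q M * actQ q N = actQ q (M * N) := by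
  rw [← mul_one (actQ q M * actQ q N), ← mul_one (actQ q (M * N))]
  ext v w
  rw [mul_assoc]
  simp only [actQ_mul_apply, Function.update_self]
  simp only [Matrix.mul_apply, Finset.mul_sum, Finset.sum_mul, ← mul_assoc]
  rw [Finset.sum_comm]
  refine Finset.sum_congr rfl fun s _ => Finset.sum_congr rfl fun t _ => ?_
  rw [Function.update_idem]

lemma actQ_comm {n : ℕ} {p q : Fin n} (h : p ≠ q) (M N : Matrix (Fin 2) (Fin 2) ℂ) :
    actQ p M * actQ q N = actQ q N * actQ p M := by
  rw [← mul_one (actQ p M * actQ q N), ← mul_one (actQ q N * actQ p M), mul_assoc, mul_assoc]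
  ext v w
  simp only [actQ_mul_apply, Function.update_of_ne h, Function.update_of_ne h.symm,
    Finset.mul_sum]
  rw [Finset.sum_comm]
  refine Finset.sum_congr rfl fun s _ => Finset.sum_congr rfl fun t _ => ?_
  rw [Function.update_comm h]
  ring

lemma actQ_neg {n : ℕ} (q : Fin n) (M : Matrix (Fin 2) (Fin 2) ℂ) :
    (actQ q (-M) : MatN n) = -actQ q M := by
  ext v w
  simp only [actQ, Matrix.neg_apply, neg_mul]

/-! ### Commutation up to a scalar -/

/-- `A` and `B` commute up to the scalar `s`. -/
def TwComm {n : ℕ} (s : ℂ) (A B : MatN n) : Prop := A * B = s • (B * A)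

namespace TwComm

variable {n : ℕ} {s t : ℂ} {A B C : MatN n}

lemma one_left (B : MatN n) : TwComm 1 1 B := by simp [TwComm]

lemma one_right (A : MatN n) : TwComm 1 A 1 := by simp [TwComm]

lemma mul_left (h : TwComm s A C) (k : TwComm t B C) : TwComm (s * t) (A * B) C := by
  unfold TwComm at *
  rw [mul_assoc, k, mul_smul_comm, ← mul_assoc, h, smul_mul_assoc, smul_smul, mul_assoc,
    mul_comm t]

lemma mul_right (h : TwComm s A B) (k : TwComm t A C) : TwComm (s * t) A (B * C) := by
  unfold TwComm at *
  rw [← mul_assoc, h, smul_mul_assoc, mul_assoc, k, mul_smul_comm, smul_smul, mul_assoc]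

lemma smul_smul (h : TwComm s A B) (x y : ℂ) : TwComm s (x • A) (y • B) := by
  unfold TwComm at *
  simp only [smul_mul_assoc, mul_smul_comm, h, _root_.smul_smul]
  congr 1
  ring

lemma pow_left (h : TwComm s A B) (m : ℕ) : TwComm (s ^ m) (A ^ m) B := by
  induction m with
  | zero => simpa using one_left B
  | succ m ih => simpa only [pow_succ] using ih.mul_left h

lemma pow_right (h : TwComm s A B) (m : ℕ) : TwComm (s ^ m) A (B ^ m) := by
  induction m with
  | zero => simpa using one_right A
  | succ m ih => simpa only [pow_succ] using ih.mul_right h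

lemma prod_ofFn_right {m : ℕ} {σ : Fin m → ℂ} {g : Fin m → MatN n}
    (h : ∀ k, TwComm (σ k) A (g k)) : TwComm (∏ k, σ k) A (List.ofFn g).prod := by
  induction m with
  | zero => simpa using one_right A
  | succ m ih =>
    rw [Fin.prod_univ_succ, List.ofFn_succ, List.prod_cons]
    exact (h 0).mul_right (ih fun k => h k.succ)

lemma prod_ofFn_left {m : ℕ} {σ : Fin m → ℂ} {f : Fin m → MatN n}
    (h : ∀ k, TwComm (σ k) (f k) B) : TwComm (∏ k, σ k) (List.ofFn f).prod B := by
  induction m with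
  | zero => simpa using one_left B
  | succ m ih =>
    rw [Fin.prod_univ_succ, List.ofFn_succ, List.prod_cons]
    exact (h 0).mul_left (ih fun k => h k.succ)

/-- If `f j` and `g k` commute for `j ≠ k` and commute up to `ε` for `j = k`, then only the
diagonal pairs contribute to the scalar of the two ordered products of powers. -/
lemma prod_ofFn {ε : ℂ} {f g : Fin n → MatN n}
    (h : ∀ j k, TwComm (if j = k then ε else 1) (f j) (g k)) (a d : Fin n → ZMod 2) :
    TwComm (∏ j, ε ^ ((a j).val * (d j).val))
      (List.ofFn fun j => f j ^ (a j).val).prod (List.ofFn fun j => g j ^ (d j).val).prod := by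
  have key := prod_ofFn_left fun j => prod_ofFn_right fun k =>
    ((h j k).pow_left (a j).val).pow_right (d k).val
  convert key using 1
  refine Finset.prod_congr rfl fun j _ => ?_
  rw [Finset.prod_eq_single j]
  · simp [pow_mul]
  · intro k _ hk
    simp [hk.symm]
  · simp

end TwComm

/-! ### Relations between Pauli operators -/

lemma Xop_Xop {n : ℕ} (j k : Fin n) : Xop n j * Xop n k = Xop n k * Xop n j := by
  by_cases h : j = k
  · rw [h]
  · exact actQ_comm h _ _

lemma Zop_Zop {n : ℕ} (j k : Fin n) : Zop n j * Zop n k = Zop n k * Zop n j := by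
  by_cases h : j = k
  · rw [h]
  · exact actQ_comm h _ _

lemma PX_mul_PZ : PX * PZ = -(PZ * PX) := by
  ext i j
  fin_cases i <;> fin_cases j <;> simp [PX, PZ]

lemma Xop_Zop {n : ℕ} (j k : Fin n) :
    TwComm (if j = k then -1 else 1) (Xop n j) (Zop n k) := by
  unfold TwComm
  split_ifs with h
  · subst h
    rw [Xop, Zop, actQ_mul_actQ, actQ_mul_actQ, PX_mul_PZ, actQ_neg, neg_one_smul]
  · rw [one_smul]
    exact actQ_comm h _ _

lemma Zop_Xop {n : ℕ} (j k : Fin n) :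
    TwComm (if j = k then -1 else 1) (Zop n j) (Xop n k) := by
  unfold TwComm
  split_ifs with h
  · subst h
    rw [Xop, Zop, actQ_mul_actQ, actQ_mul_actQ, PX_mul_PZ, actQ_neg, neg_one_smul, neg_neg]
  · rw [one_smul]
    exact actQ_comm h _ _

lemma XpowVec_XpowVec {n : ℕ} (a c : Fin n → ZMod 2) :
    TwComm 1 (XpowVec n a) (XpowVec n c) := by
  have := TwComm.prod_ofFn (ε := 1) (f := Xop n) (g := Xop n)
    (fun j k => by simp [TwComm, Xop_Xop j k]) a c
  simp only [one_pow, Finset.prod_const_one] at this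
  exact this

lemma ZpowVec_ZpowVec {n : ℕ} (b d : Fin n → ZMod 2) :
    TwComm 1 (ZpowVec n b) (ZpowVec n d) := by
  have := TwComm.prod_ofFn (ε := 1) (f := Zop n) (g := Zop n)
    (fun j k => by simp [TwComm, Zop_Zop j k]) b d
  simp only [one_pow, Finset.prod_const_one] at this
  exact this

/-! ### The sign character of `ZMod 2` -/

lemma neg_one_pow_val_add (x y : ZMod 2) :
    (-1 : ℂ) ^ (x + y).val = (-1) ^ x.val * (-1) ^ y.val := by
  rw [← pow_add, ZMod.val_add, ← neg_one_pow_eq_pow_mod_two]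

lemma neg_one_pow_val_mul (x y : ZMod 2) :
    (-1 : ℂ) ^ (x * y).val = (-1) ^ (x.val * y.val) := by
  rw [ZMod.val_mul, ← neg_one_pow_eq_pow_mod_two]

lemma neg_one_pow_val_sum {ι : Type*} (S : Finset ι) (f : ι → ZMod 2) :
    (-1 : ℂ) ^ (∑ j ∈ S, f j).val = ∏ j ∈ S, (-1) ^ (f j).val := by
  induction S using Finset.induction_on with
  | empty => simp
  | insert j S hj ih => rw [Finset.sum_insert hj, Finset.prod_insert hj, neg_one_pow_val_add, ih]

/-! ### Commutation up to sign in the Pauli group -/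

/-- Commutation up to sign in the unit group of the operator algebra. -/
def SignComm {n : ℕ} (P Q : (MatN n)ˣ) : Prop := P * Q = Q * P ∨ P * Q = -(Q * P)

namespace SignComm

variable {n : ℕ} {P Q R : (MatN n)ˣ}

lemma symm (h : SignComm P Q) : SignComm Q P := by
  rcases h with h | h
  · exact Or.inl h.symm
  · exact Or.inr (by rw [h, neg_neg])

lemma one_left (Q : (MatN n)ˣ) : SignComm 1 Q := Or.inl (by simp)

lemma mul_left (h : SignComm P R) (k : SignComm Q R) : SignComm (P * Q) R := by
  unfold SignComm at *
  have e : P * Q * R = P * (Q * R) := mul_assoc _ _ _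
  have f : R * (P * Q) = R * P * Q := (mul_assoc _ _ _).symm
  rcases h with h | h <;> rcases k with k | k <;>
    rw [e, f, k] <;> simp only [mul_neg, ← mul_assoc, h, neg_mul, neg_neg] <;> simp

lemma inv_left (h : SignComm P Q) : SignComm P⁻¹ Q := by
  rcases h with h | h
  · exact Or.inl (Commute.inv_left h)
  · refine Or.inr ?_
    rw [inv_mul_eq_iff_eq_mul, mul_neg, ← mul_assoc, h, neg_mul, neg_neg, mul_inv_cancel_right]

lemma of_twComm {s : ℂ} (hs : s = 1 ∨ s = -1) (h : TwComm s (P : MatN n) (Q : MatN n)) :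
    SignComm P Q := by
  rcases hs with rfl | rfl
  · exact Or.inl (Units.ext (by simpa [TwComm] using h))
  · exact Or.inr (Units.ext (by simpa [TwComm] using h))

lemma of_scalar (hP : (P : MatN n) = Complex.I • 1) (Q : (MatN n)ˣ) : SignComm P Q :=
  Or.inl (Units.ext (by simp [hP]))

lemma of_gens (hP : P ∈ pauliGens n) (hQ : Q ∈ pauliGens n) : SignComm P Q := by
  have sign : ∀ j k : Fin n, (if j = k then (-1 : ℂ) else 1) = 1 ∨
      (if j = k then (-1 : ℂ) else 1) = -1 := fun j k => by split_ifs <;> simp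
  rcases hP with hP | ⟨j, hP⟩ | ⟨j, hP⟩
  · exact of_scalar hP Q
  all_goals rcases hQ with hQ | ⟨k, hQ⟩ | ⟨k, hQ⟩
  · exact (of_scalar hQ P).symm
  · exact Or.inl (Units.ext (by simp [hP, hQ, Xop_Xop j k]))
  · exact of_twComm (sign j k) (by rw [hP, hQ]; exact Xop_Zop j k)
  · exact (of_scalar hQ P).symm
  · exact of_twComm (sign j k) (by rw [hP, hQ]; exact Zop_Xop j k)
  · exact Or.inl (Units.ext (by simp [hP, hQ, Zop_Zop j k]))

/-- For fixed `Q`, the units commuting with `Q` up to sign form a subgroup. -/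
lemma of_closure_left {S : Set (MatN n)ˣ} (h : ∀ P ∈ S, SignComm P Q)
    (hP : P ∈ Subgroup.closure S) : SignComm P Q := by
  induction hP using Subgroup.closure_induction with
  | mem x hx => exact h x hx
  | one => exact one_left Q
  | mul x y _ _ hx hy => exact hx.mul_left hy
  | inv x _ hx => exact hx.inv_left

end SignComm

/-- For `P = i^λ • (X^a * Z^b)` and `Q = i^μ • (X^c * Z^d)`, one has
`P * Q = (-1)^(Σⱼ (aⱼdⱼ + bⱼcⱼ)) • (Q * P)` (exponent computed in `ZMod 2`);
in particular any two elements of `P_n` either commute or anticommute. -/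
theorem pauli_commute_or_anticommute (n : ℕ) (hn : 1 ≤ n) :
    (∀ (lam mu : ZMod 4) (a b c d : Fin n → ZMod 2),
      (Complex.I ^ lam.val • (XpowVec n a * ZpowVec n b)) *
          (Complex.I ^ mu.val • (XpowVec n c * ZpowVec n d)) =
        ((-1 : ℂ) ^ (∑ j, (a j * d j + b j * c j)).val) •
          ((Complex.I ^ mu.val • (XpowVec n c * ZpowVec n d)) *
            (Complex.I ^ lam.val • (XpowVec n a * ZpowVec n b)))) ∧
    (∀ P ∈ PauliGroup n, ∀ Q ∈ PauliGroup n, P * Q = Q * P ∨ P * Q = -(Q * P)) := by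
  refine ⟨fun lam mu a b c d => ?_, fun P hP Q hQ => ?_⟩
  · have hXZ : TwComm _ (XpowVec n a) (ZpowVec n d) := TwComm.prod_ofFn Xop_Zop a d
    have hZX : TwComm _ (ZpowVec n b) (XpowVec n c) := TwComm.prod_ofFn Zop_Xop b c
    have key := (((XpowVec_XpowVec a c).mul_right hXZ).mul_left
      (hZX.mul_right (ZpowVec_ZpowVec b d))).smul_smul (Complex.I ^ lam.val) (Complex.I ^ mu.val)
    rw [one_mul, mul_one, ← Finset.prod_mul_distrib] at key
    simp only [neg_one_pow_val_sum, neg_one_pow_val_add, neg_one_pow_val_mul]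
    exact key
  · exact SignComm.of_closure_left (fun P' hP' => (SignComm.of_closure_left
      (fun Q' hQ' => SignComm.of_gens hQ' hP') hQ).symm) hP
end
end

section
/- Let S be a stabilizer group in the n-qubit Pauli group with |S| = 2^s (i.e., s independent generators). Then the codespace C = {ψ | S.mulVec ψ = ψ for all S ∈ S} is a ℂ-subspace of dimension 2^(n−s); that is, the code encodes k = n − s logical qubits. -/
/-!
The average of the elements of `S` is a projection onto the codespace, so the dimension of the
codespace is `|S|⁻¹ ∑ tr g`, the sum being over `g ∈ S`. Every Pauli operator has the normal form
`c Z^b X^a` with `c ^ 4 = 1` (`exists_pauliForm`), and its trace vanishes unless `a = 0` and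
`b = 0` (`trace_pauliForm`). An element of `S` with nonzero trace is therefore a scalar `c` with
`c ^ 4 = 1`, and if `c ≠ 1` then `-1` is that element or its square. As `-1 ∉ S`, only `g = 1`
contributes, so `2 ^ s * dim = 2 ^ n`. This equation also forces `s ≤ n`, so that the truncated
subtraction `n - s` is a true one.
-/

open Matrix Complex
open scoped Classical

noncomputable section

/-- The codespace of a stabilizer group: all state vectors fixed by every stabilizer. -/
def codespace (n : ℕ) (S : Subgroup (MatN n)ˣ) : Submodule ℂ ((Fin n → Fin 2) → ℂ) where
  carrier := {ψ | ∀ g ∈ S, (g : MatN n) *ᵥ ψ = ψ}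
  add_mem' := by
    intro x y hx hy g hg
    rw [Matrix.mulVec_add, hx g hg, hy g hg]
  zero_mem' := by
    intro g hg
    rw [Matrix.mulVec_zero]
  smul_mem' := by
    intro t x hx g hg
    rw [Matrix.mulVec_smul, hx g hg]


/-! ### Pauli operators in normal form -/

/-- The sign `(-1) ^ (x * y)` of two bits. -/
def bitSign (x y : Fin 2) : ℂ := if x = 1 ∧ y = 1 then -1 else 1

/-- The character `v ↦ (-1) ^ (b · v)` of bit strings. -/
def bitChar {n : ℕ} (b v : Fin n → Fin 2) : ℂ := ∏ j, bitSign (b j) (v j)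

/-- The operator `c Z^b X^a`, given by its matrix entries: row `v` has a single nonzero entry,
`c * (-1) ^ (b · v)`, in column `v + a`. -/
def pauliForm {n : ℕ} (c : ℂ) (a b : Fin n → Fin 2) : MatN n :=
  fun v w => c * bitChar b v * if w = v + a then 1 else 0

lemma bitSign_add_left (x y z : Fin 2) : bitSign (x + y) z = bitSign x z * bitSign y z := by
  fin_cases x <;> fin_cases y <;> fin_cases z <;> simp [bitSign]

lemma bitSign_add_right (x y z : Fin 2) : bitSign x (y + z) = bitSign x y * bitSign x z := by
  fin_cases x <;> fin_cases y <;> fin_cases z <;> simp [bitSign]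

lemma bitChar_add_left {n : ℕ} (a b v : Fin n → Fin 2) :
    bitChar (a + b) v = bitChar a v * bitChar b v := by
  simp [bitChar, bitSign_add_left, Finset.prod_mul_distrib]

lemma bitChar_add_right {n : ℕ} (b v w : Fin n → Fin 2) :
    bitChar b (v + w) = bitChar b v * bitChar b w := by
  simp [bitChar, bitSign_add_right, Finset.prod_mul_distrib]

lemma bitChar_zero {n : ℕ} (v : Fin n → Fin 2) : bitChar 0 v = 1 := by
  simp [bitChar, bitSign]

lemma bits_add_self {n : ℕ} (a : Fin n → Fin 2) : a + a = 0 := by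
  funext j
  have h : ∀ x : Fin 2, x + x = 0 := by decide
  exact h (a j)

lemma bitChar_sq {n : ℕ} (b v : Fin n → Fin 2) : bitChar b v ^ 2 = 1 := by
  rw [sq, ← bitChar_add_left, bits_add_self, bitChar_zero]

lemma pauliForm_mul {n : ℕ} (c c' : ℂ) (a b a' b' : Fin n → Fin 2) :
    pauliForm c a b * pauliForm c' a' b' =
      pauliForm (c * c' * bitChar b' a) (a + a') (b + b') := by
  ext v w
  rw [Matrix.mul_apply, Finset.sum_eq_single (v + a)]
  · simp only [pauliForm, bitChar_add_left, bitChar_add_right, add_assoc, if_true]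
    ring
  · intro u _ hu
    simp [pauliForm, hu]
  · simp

lemma pauliForm_zero_zero {n : ℕ} (c : ℂ) : pauliForm c (0 : Fin n → Fin 2) 0 = c • 1 := by
  ext v w
  simp [pauliForm, bitChar_zero, Matrix.one_apply, eq_comm]

lemma Xop_eq_pauliForm (n : ℕ) (j : Fin n) : Xop n j = pauliForm 1 (Pi.single j 1) 0 := by
  ext v w
  have key : w = v + Pi.single j 1 ↔ w j = v j + 1 ∧ ∀ k, k ≠ j → v k = w k := by
    constructor
    · rintro rfl
      exact ⟨by simp, fun k hk => by simp [hk]⟩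
    · rintro ⟨h, h'⟩
      funext k
      by_cases hk : k = j
      · subst hk; simpa using h
      · simp [hk, h' k hk]
  simp only [Xop, actQ, pauliForm, bitChar_zero, key]
  by_cases h : ∀ k, k ≠ j → v k = w k
  · simp only [and_iff_left h, if_pos h]
    generalize v j = x
    generalize w j = y
    fin_cases x <;> fin_cases y <;> simp [PX]
  · simp [h]

lemma Zop_eq_pauliForm (n : ℕ) (j : Fin n) : Zop n j = pauliForm 1 0 (Pi.single j 1) := by
  ext v w
  have key : w = v + 0 ↔ w j = v j ∧ ∀ k, k ≠ j → v k = w k := by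
    rw [add_zero]
    constructor
    · rintro rfl
      exact ⟨rfl, fun k _ => rfl⟩
    · rintro ⟨h, h'⟩
      funext k
      by_cases hk : k = j
      · subst hk; exact h
      · exact (h' k hk).symm
  have hchar : bitChar (Pi.single j 1) v = bitSign 1 (v j) := by
    rw [bitChar, Finset.prod_eq_single j]
    · simp
    · intro k _ hk
      simp [hk, bitSign]
    · simp
  simp only [Zop, actQ, pauliForm, hchar, key]
  by_cases h : ∀ k, k ≠ j → v k = w k
  · simp only [and_iff_left h, if_pos h]
    generalize v j = x
    generalize w j = y
    fin_cases x <;> fin_cases y <;> simp [PZ, bitSign]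
  · simp [h]

/-- Normal form of the elements of the Pauli group. -/
lemma exists_pauliForm {n : ℕ} {u : (MatN n)ˣ} (hu : u ∈ PauliGroup n) :
    ∃ (c : ℂ) (a b : Fin n → Fin 2), c ^ 4 = 1 ∧ (u : MatN n) = pauliForm c a b := by
  have hmul : ∀ x y : (MatN n)ˣ,
      (∃ (c : ℂ) (a b : Fin n → Fin 2), c ^ 4 = 1 ∧ (x : MatN n) = pauliForm c a b) →
      (∃ (c : ℂ) (a b : Fin n → Fin 2), c ^ 4 = 1 ∧ (y : MatN n) = pauliForm c a b) →
      ∃ (c : ℂ) (a b : Fin n → Fin 2),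
        c ^ 4 = 1 ∧ ((x * y : (MatN n)ˣ) : MatN n) = pauliForm c a b := by
    rintro x y ⟨c, a, b, hc, hx⟩ ⟨c', a', b', hc', hy⟩
    refine ⟨_, _, _, ?_, by rw [Units.val_mul, hx, hy, pauliForm_mul]⟩
    have h := bitChar_sq b' a
    linear_combination (c' ^ 4 * bitChar b' a ^ 4) * hc + bitChar b' a ^ 4 * hc' +
      (bitChar b' a ^ 2 + 1) * h
  induction hu using Subgroup.closure_induction with
  | mem x hx =>
    rcases hx with hx | ⟨j, hx⟩ | ⟨j, hx⟩
    · exact ⟨I, 0, 0, I_pow_four, by rw [hx, pauliForm_zero_zero]⟩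
    · exact ⟨1, _, _, one_pow _, by rw [hx, Xop_eq_pauliForm]⟩
    · exact ⟨1, _, _, one_pow _, by rw [hx, Zop_eq_pauliForm]⟩
  | one => exact ⟨1, 0, 0, one_pow _, by rw [pauliForm_zero_zero]; simp⟩
  | mul x y _ _ hx hy => exact hmul x y hx hy
  | inv x _ hx =>
    -- `x ^ 2` is a scalar, hence `x ^ 8 = 1` and `x⁻¹` is the positive power `x ^ 7`.
    have h8 : x ^ 8 = 1 := by
      obtain ⟨c, a, b, hc, h⟩ := hx
      have h2 : (x : MatN n) ^ 2 = (c * c * bitChar b a) • 1 := by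
        rw [sq, h, pauliForm_mul, bits_add_self, bits_add_self, pauliForm_zero_zero]
      have hb := bitChar_sq b a
      have h4 : (c * c * bitChar b a) ^ 4 = 1 := by
        linear_combination bitChar b a ^ 4 * (c ^ 4 + 1) * hc + (bitChar b a ^ 2 + 1) * hb
      ext1
      rw [Units.val_pow_eq_pow_val, show 8 = 2 * 4 from rfl, pow_mul, h2, smul_pow, h4]
      simp
    have hinv : x⁻¹ = x * (x * (x * (x * (x * (x * x))))) := by
      rw [inv_eq_iff_mul_eq_one, ← h8]
      simp only [pow_succ, pow_zero, one_mul, mul_assoc]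
    rw [hinv]
    exact hmul _ _ hx (hmul _ _ hx (hmul _ _ hx (hmul _ _ hx (hmul _ _ hx (hmul _ _ hx hx)))))

/-! ### Traces -/

lemma trace_pauliForm {n : ℕ} (c : ℂ) (a b : Fin n → Fin 2) (h : ¬ (a = 0 ∧ b = 0)) :
    (pauliForm c a b).trace = 0 := by
  by_cases ha : a = 0
  · obtain ⟨j, hj⟩ : ∃ j, b j ≠ 0 := by
      by_contra! hb
      exact h ⟨ha, funext hb⟩
    have hj1 : b j = 1 := by omega
    -- The sum of the character over all bit strings factors over the qubits.
    have hsum : ∑ v, bitChar b v = 0 := by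
      have := Finset.prod_univ_sum (fun _ : Fin n => (Finset.univ : Finset (Fin 2)))
        (fun i x => bitSign (b i) x)
      rw [Fintype.piFinset_univ] at this
      simp only [bitChar]
      rw [← this]
      apply Finset.prod_eq_zero (Finset.mem_univ j)
      simp [bitSign, hj1]
    simp [Matrix.trace, pauliForm, ha, ← Finset.mul_sum, hsum]
  · simp [Matrix.trace, pauliForm, ha]

/-- In a subgroup of the Pauli group not containing `-1`, the identity is the only element of
nonzero trace. -/
lemma trace_eq_zero_of_ne_one {n : ℕ} {S : Subgroup (MatN n)ˣ} (hS : S ≤ PauliGroup n)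
    (hneg : (-1 : (MatN n)ˣ) ∉ S) {g : (MatN n)ˣ} (hg : g ∈ S) (h1 : g ≠ 1) :
    (g : MatN n).trace = 0 := by
  obtain ⟨c, a, b, hc, h⟩ := exists_pauliForm (hS hg)
  rw [h]
  apply trace_pauliForm
  rintro ⟨rfl, rfl⟩
  rw [pauliForm_zero_zero] at h
  have hfac : (c - 1) * ((c + 1) * (c ^ 2 + 1)) = 0 := by linear_combination hc
  rcases mul_eq_zero.mp hfac with h0 | h0
  · apply h1
    ext1
    rw [h, sub_eq_zero.mp h0, one_smul, Units.val_one]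
  rcases mul_eq_zero.mp h0 with h0 | h0
  · apply hneg
    convert hg using 1
    ext1
    rw [h, eq_neg_of_add_eq_zero_left h0]
    simp
  · apply hneg
    convert S.pow_mem hg 2 using 1
    ext1
    rw [Units.val_pow_eq_pow_val, h, smul_pow, eq_neg_of_add_eq_zero_left h0]
    simp

/-! ### The dimension of the codespace -/

/-- The natural action of a group of invertible operators on the state space. -/
def natRep (n : ℕ) (S : Subgroup (MatN n)ˣ) : Representation ℂ S ((Fin n → Fin 2) → ℂ) where
  toFun g := Matrix.toLin' ((g : (MatN n)ˣ) : MatN n)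
  map_one' := by simp [Module.End.one_eq_id]
  map_mul' g h := by simp [Matrix.toLin'_mul, Module.End.mul_eq_comp]

lemma invariants_natRep (n : ℕ) (S : Subgroup (MatN n)ˣ) :
    (natRep n S).invariants = codespace n S := by
  ext ψ
  simp [natRep, codespace, Representation.mem_invariants]

/-- If `|S| = 2^s`, the codespace is a `ℂ`-subspace of dimension `2^(n-s)`, i.e. the code
encodes `k = n - s` logical qubits. -/
theorem codespace_finrank (n s : ℕ) (hn : 1 ≤ n)
    (S : Subgroup (MatN n)ˣ) (hS : S ≤ PauliGroup n)
    (habel : ∀ a ∈ S, ∀ b ∈ S, a * b = b * a)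
    (hneg : (-1 : (MatN n)ˣ) ∉ S)
    (hcard : Nat.card ↥S = 2 ^ s) :
    Module.finrank ℂ ↥(codespace n S) = 2 ^ (n - s) := by
  have hfin : Finite S := Nat.finite_of_card_ne_zero (by rw [hcard]; positivity)
  have := Fintype.ofFinite S
  have hcard' : Fintype.card S = 2 ^ s := by rw [← Nat.card_eq_fintype_card, hcard]
  have : Invertible (Fintype.card S : ℂ) := invertibleOfNonzero (by simp [hcard'])
  have htr := (Representation.isProj_averageMap (natRep n S)).trace
  have hsum : ∑ g : S, LinearMap.trace ℂ _ (natRep n S g) = 2 ^ n := by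
    rw [Finset.sum_eq_single 1]
    · simp
    · intro g _ hg
      have : (g : (MatN n)ˣ) ≠ 1 := fun h => hg (Subtype.ext h)
      change LinearMap.trace ℂ _ (Matrix.toLin' _) = 0
      rw [Matrix.trace_toLin'_eq]
      exact trace_eq_zero_of_ne_one hS hneg g.2 this
    · simp
  have hmain : (Module.finrank ℂ (codespace n S) : ℂ) * 2 ^ s = 2 ^ n := by
    rw [← invariants_natRep, ← htr, ← hsum]
    simp only [Representation.averageMap, GroupAlgebra.average, map_smul, map_sum, smul_eq_mul,
      MonoidAlgebra.of_apply, Representation.asAlgebraHom_single_one]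
    rw [invOf_eq_inv, hcard']
    push_cast
    field_simp
  have hnat : Module.finrank ℂ (codespace n S) * 2 ^ s = 2 ^ n := by exact_mod_cast hmain
  have hsn : s ≤ n :=
    (Nat.pow_dvd_pow_iff_le_right one_lt_two).mp ⟨_, by rw [← hnat, mul_comm]⟩
  apply Nat.eq_of_mul_eq_mul_right (show 0 < 2 ^ s by positivity)
  rw [hnat, ← pow_add, Nat.sub_add_cancel hsn]
end
end

section
/- Let S be a stabilizer group in the n-qubit Pauli group with |S| = 2^s. If E ∈ N(S) acts as the identity on the codespace (E.mulVec ψ = ψ for all ψ ∈ C), then E ∈ S. Consequently, elements of N(S) that are not in ⟨i⟩S act nontrivially on the codespace, i.e., they are nontrivial logical operators. -/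
/-!
Write `P = ∑_{g ∈ S} g`; up to the factor `1 / |S|` this is the projector onto the codespace.
Since `h * P = P` for every `h ∈ S`, each vector `P ψ` lies in the codespace, so an operator `E`
acting as the identity on the codespace satisfies `E * P = P`.

The decisive input is `pauli_scalar_or_trace`: a Pauli operator either is a scalar `c • 1` with
`c ^ 4 = 1`, or has trace zero. It holds because each Pauli operator is a phase times a tensor
product of signed `2 × 2` permutation matrices (`IsPauliTensor`). As `-1 ∉ S`, the only scalar
in `S` is `1`, hence `tr P = 2 ^ n ≠ 0`.

Taking traces in `∑_{g ∈ S} E * g = E * P = P` shows that some `E * g` has nonzero trace, so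
`E * g = c • 1` and `E = c • g⁻¹`. Then `P = E * P = c • P`, and `tr P ≠ 0` forces `c = 1`, that
is, `E = g⁻¹ ∈ S`.
-/

open Matrix Complex
open scoped Classical

noncomputable section

/-- The set `⟨i⟩S = {i^λ • S | λ ∈ ZMod 4, S ∈ S}` of stabilizers up to phase. -/
def phaseStab (n : ℕ) (S : Subgroup (MatN n)ˣ) : Set (MatN n) :=
  {M | ∃ lam : ZMod 4, ∃ g ∈ S, M = Complex.I ^ lam.val • ((g : (MatN n)ˣ) : MatN n)}

/-- Signed real `2 × 2` permutation matrices: the group of order eight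
`{±1, ±X, ±Z, ±XZ}`. -/
def IsSignedPerm (M : Matrix (Fin 2) (Fin 2) ℂ) : Prop :=
  ∃ a b : ℂ, a ^ 2 = 1 ∧ b ^ 2 = 1 ∧ (M = !![a, 0; 0, b] ∨ M = !![0, a; b, 0])

lemma IsSignedPerm.mul {M N : Matrix (Fin 2) (Fin 2) ℂ} (hM : IsSignedPerm M)
    (hN : IsSignedPerm N) : IsSignedPerm (M * N) := by
  obtain ⟨a, b, ha, hb, rfl | rfl⟩ := hM <;> obtain ⟨c, d, hc, hd, rfl | rfl⟩ := hN
  · exact ⟨a * c, b * d, by simp [mul_pow, *], by simp [mul_pow, *], by simp⟩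
  · exact ⟨a * c, b * d, by simp [mul_pow, *], by simp [mul_pow, *], by simp⟩
  · exact ⟨a * d, b * c, by simp [mul_pow, *], by simp [mul_pow, *], by simp⟩
  · exact ⟨a * d, b * c, by simp [mul_pow, *], by simp [mul_pow, *], by simp⟩

/-- The inverse of a signed permutation matrix is its transpose. -/
lemma IsSignedPerm.exists_inv {M : Matrix (Fin 2) (Fin 2) ℂ} (hM : IsSignedPerm M) :
    ∃ N, IsSignedPerm N ∧ M * N = 1 := by
  obtain ⟨a, b, ha, hb, rfl | rfl⟩ := hM
  · refine ⟨!![a, 0; 0, b], ⟨a, b, ha, hb, Or.inl rfl⟩, ?_⟩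
    rw [pow_two] at ha hb
    simp [ha, hb, Matrix.one_fin_two]
  · refine ⟨!![0, b; a, 0], ⟨b, a, hb, ha, Or.inr rfl⟩, ?_⟩
    rw [pow_two] at ha hb
    simp [ha, hb, Matrix.one_fin_two]

lemma IsSignedPerm.one : IsSignedPerm 1 :=
  ⟨1, 1, by simp, by simp, Or.inl Matrix.one_fin_two⟩

lemma IsSignedPerm.scalar_or_trace {M : Matrix (Fin 2) (Fin 2) ℂ} (hM : IsSignedPerm M) :
    (∃ c : ℂ, c ^ 2 = 1 ∧ M = c • 1) ∨ M.trace = 0 := by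
  obtain ⟨a, b, ha, hb, rfl | rfl⟩ := hM
  · rcases sq_eq_sq_iff_eq_or_eq_neg.mp (ha.trans hb.symm) with rfl | rfl
    · exact Or.inl ⟨a, ha, by simp [Matrix.one_fin_two]⟩
    · exact Or.inr (by simp [Matrix.trace_fin_two])
  · exact Or.inr (by simp [Matrix.trace_fin_two])

/-- The tensor product `p₁ ⊗ ⋯ ⊗ pₙ` of single-qubit operators. -/
def tensorOp {n : ℕ} (p : Fin n → Matrix (Fin 2) (Fin 2) ℂ) : MatN n :=
  fun v w => ∏ j, p j (v j) (w j)

lemma tensorOp_mul {n : ℕ} (p q : Fin n → Matrix (Fin 2) (Fin 2) ℂ) :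
    tensorOp p * tensorOp q = tensorOp fun j => p j * q j := by
  ext v w
  simp only [tensorOp, Matrix.mul_apply, ← Finset.prod_mul_distrib]
  rw [Finset.prod_univ_sum, Fintype.piFinset_univ]

lemma tensorOp_trace {n : ℕ} (p : Fin n → Matrix (Fin 2) (Fin 2) ℂ) :
    (tensorOp p).trace = ∏ j, (p j).trace := by
  simp only [tensorOp, Matrix.trace, Matrix.diag_apply]
  rw [Finset.prod_univ_sum, Fintype.piFinset_univ]

lemma tensorOp_smul_one {n : ℕ} (c : Fin n → ℂ) :
    tensorOp (fun j => c j • (1 : Matrix (Fin 2) (Fin 2) ℂ)) = (∏ j, c j) • (1 : MatN n) := by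
  ext v w
  simp only [tensorOp, Matrix.smul_apply, Matrix.one_apply, smul_eq_mul,
    Finset.prod_mul_distrib]
  congr 1
  rw [Finset.prod_ite_zero]
  simp [funext_iff]

lemma tensorOp_one {n : ℕ} : tensorOp (fun _ : Fin n => 1) = 1 := by
  simpa using tensorOp_smul_one (n := n) fun _ => 1

lemma actQ_eq_tensorOp {n : ℕ} (j : Fin n) (M : Matrix (Fin 2) (Fin 2) ℂ) :
    actQ j M = tensorOp (Function.update (fun _ => 1) j M) := by
  ext v w
  simp only [actQ, tensorOp]
  rw [← Finset.mul_prod_erase _ _ (Finset.mem_univ j), Function.update_self]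
  congr 1
  have h : ∀ k ∈ Finset.univ.erase j,
      Function.update (fun _ => (1 : Matrix (Fin 2) (Fin 2) ℂ)) j M k (v k) (w k)
        = if v k = w k then 1 else 0 := by
    intro k hk
    rw [Function.update_of_ne (Finset.ne_of_mem_erase hk), Matrix.one_apply]
  rw [Finset.prod_congr rfl h, Finset.prod_ite_zero]
  simp

/-- Operators that are a fourth root of unity times a tensor product of signed permutation
matrices; every Pauli operator has this form. -/
def IsPauliTensor {n : ℕ} (M : MatN n) : Prop :=
  ∃ (c : ℂ) (p : Fin n → Matrix (Fin 2) (Fin 2) ℂ),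
    c ^ 4 = 1 ∧ (∀ j, IsSignedPerm (p j)) ∧ M = c • tensorOp p

lemma isPauliTensor_actQ {n : ℕ} (j : Fin n) {M : Matrix (Fin 2) (Fin 2) ℂ}
    (hM : IsSignedPerm M) : IsPauliTensor (actQ j M) := by
  refine ⟨1, _, by simp, fun k => ?_, by rw [one_smul, actQ_eq_tensorOp]⟩
  by_cases h : k = j
  · subst h; simpa using hM
  · simpa [h] using IsSignedPerm.one

lemma isPauliTensor_of_mem {n : ℕ} {g : (MatN n)ˣ} (hg : g ∈ PauliGroup n) :
    IsPauliTensor (g : MatN n) := by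
  induction hg using Subgroup.closure_induction with
  | mem u hu =>
    rcases hu with h | ⟨j, h⟩ | ⟨j, h⟩ <;> rw [h]
    · exact ⟨Complex.I, fun _ => 1, Complex.I_pow_four, fun _ => IsSignedPerm.one,
        by rw [tensorOp_one]⟩
    · exact isPauliTensor_actQ j ⟨1, 1, by simp, by simp, Or.inr rfl⟩
    · exact isPauliTensor_actQ j ⟨1, -1, by simp, by simp, Or.inl rfl⟩
  | one =>
    exact ⟨1, fun _ => 1, by simp, fun _ => IsSignedPerm.one, by simp [tensorOp_one]⟩
  | mul x y _ _ hx hy =>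
    obtain ⟨c, p, hc, hp, hx⟩ := hx
    obtain ⟨d, q, hd, hq, hy⟩ := hy
    refine ⟨c * d, fun j => p j * q j, by rw [mul_pow, hc, hd, one_mul],
      fun j => (hp j).mul (hq j), ?_⟩
    rw [Units.val_mul, hx, hy, smul_mul_smul_comm, tensorOp_mul]
  | inv x _ hx =>
    obtain ⟨c, p, hc, hp, hx⟩ := hx
    choose q hq hpq using fun j => (hp j).exists_inv
    -- `c ^ 3` is the inverse of the fourth root of unity `c`.
    refine ⟨c ^ 3, q, by rw [← pow_mul, mul_comm, pow_mul, hc, one_pow], hq, ?_⟩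
    have h : (x : MatN n) * (c ^ 3 • tensorOp q) = 1 := by
      rw [hx, smul_mul_smul_comm, tensorOp_mul, ← pow_succ', hc, one_smul]
      simp only [hpq, tensorOp_one]
    exact Units.inv_eq_of_mul_eq_one_right h

lemma pauli_scalar_or_trace {n : ℕ} {g : (MatN n)ˣ} (hg : g ∈ PauliGroup n) :
    (∃ c : ℂ, c ^ 4 = 1 ∧ (g : MatN n) = c • 1) ∨ (g : MatN n).trace = 0 := by
  obtain ⟨c, p, hc, hp, h⟩ := isPauliTensor_of_mem hg
  by_cases htr : ∃ j, (p j).trace = 0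
  · obtain ⟨j, hj⟩ := htr
    right
    rw [h, Matrix.trace_smul, tensorOp_trace, Finset.prod_eq_zero (Finset.mem_univ j) hj,
      smul_zero]
  · push Not at htr
    left
    choose d hd hpd using fun j => (hp j).scalar_or_trace.resolve_right (htr j)
    refine ⟨c * ∏ j, d j, ?_, ?_⟩
    · have h4 : ∀ j, d j ^ 4 = 1 := fun j => by
        rw [show 4 = 2 * 2 from rfl, pow_mul, hd, one_pow]
      simp [mul_pow, hc, ← Finset.prod_pow, h4]
    · rw [h, funext hpd, tensorOp_smul_one, smul_smul]

/-- The identity is the only scalar in a stabilizer group: any other fourth root of unity has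
`-1` among its powers. -/
lemma stabilizer_eq_one_or_trace {n : ℕ} {S : Subgroup (MatN n)ˣ} (hS : S ≤ PauliGroup n)
    (hneg : (-1 : (MatN n)ˣ) ∉ S) {g : (MatN n)ˣ} (hg : g ∈ S) :
    g = 1 ∨ (g : MatN n).trace = 0 := by
  refine (pauli_scalar_or_trace (hS hg)).imp_left ?_
  rintro ⟨c, hc, h⟩
  have hc2 : (c ^ 2) ^ 2 = 1 := by rw [← pow_mul]; exact hc
  rcases sq_eq_one_iff.mp hc2 with h1 | h1
  · rcases sq_eq_one_iff.mp h1 with rfl | rfl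
    · exact Units.ext (by simpa using h)
    · exact absurd (by convert hg using 1; exact Units.ext (by simp [h])) hneg
  · refine absurd ?_ hneg
    convert S.pow_mem hg 2 using 1
    exact Units.ext (by simp [h, smul_pow, h1])

/-- `∑_{g ∈ S} g`, which is `|S|` times the projector onto the codespace. -/
def stabSum {n : ℕ} (S : Subgroup (MatN n)ˣ) [Fintype S] : MatN n :=
  ∑ g : S, ((g : (MatN n)ˣ) : MatN n)

lemma mul_stabSum {n : ℕ} (S : Subgroup (MatN n)ˣ) [Fintype S] {h : (MatN n)ˣ} (hh : h ∈ S) :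
    (h : MatN n) * stabSum S = stabSum S := by
  rw [stabSum, Finset.mul_sum]
  exact Fintype.sum_equiv (Equiv.mulLeft (⟨h, hh⟩ : S)) _ _ fun g => by simp

lemma stabSum_trace_ne_zero {n : ℕ} {S : Subgroup (MatN n)ˣ} [Fintype S]
    (hS : S ≤ PauliGroup n) (hneg : (-1 : (MatN n)ˣ) ∉ S) : (stabSum S).trace ≠ 0 := by
  rw [stabSum, Matrix.trace_sum, Finset.sum_eq_single (1 : S)]
  · simp [Matrix.trace_one]
  · intro g _ hg
    exact (stabilizer_eq_one_or_trace hS hneg g.2).resolve_left fun h => hg (Subtype.ext h)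
  · simp

/-- A Pauli operator fixing the codespace pointwise belongs to the stabilizer group. -/
lemma mem_of_fixes_codespace {n : ℕ} {S : Subgroup (MatN n)ˣ} [Fintype S]
    (hS : S ≤ PauliGroup n) (hneg : (-1 : (MatN n)ˣ) ∉ S) {E : (MatN n)ˣ}
    (hE : E ∈ PauliGroup n) (hfix : ∀ ψ ∈ codespace n S, (E : MatN n) *ᵥ ψ = ψ) : E ∈ S := by
  have htr := stabSum_trace_ne_zero hS hneg
  have hEP : (E : MatN n) * stabSum S = stabSum S := by
    refine Matrix.mulVec_injective (funext fun ψ => ?_)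
    rw [← Matrix.mulVec_mulVec]
    refine hfix _ fun g hg => ?_
    rw [Matrix.mulVec_mulVec, mul_stabSum S hg]
  obtain ⟨g, hg⟩ : ∃ g : S, ((E * g : (MatN n)ˣ) : MatN n).trace ≠ 0 := by
    by_contra! h
    apply htr
    rw [← hEP, stabSum, Finset.mul_sum, Matrix.trace_sum]
    exact Finset.sum_eq_zero fun g _ => h g
  obtain ⟨c, -, hc⟩ := (pauli_scalar_or_trace (mul_mem hE (hS g.2))).resolve_right hg
  have hcP : stabSum S = c • stabSum S := by
    calc stabSum S = (E : MatN n) * (((g : (MatN n)ˣ) : MatN n) * stabSum S) := by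
          rw [mul_stabSum S g.2, hEP]
      _ = c • stabSum S := by
          rw [← mul_assoc, ← Units.val_mul, hc, smul_mul_assoc, one_mul]
  have hc1 : c = 1 := by
    have := congrArg Matrix.trace hcP
    rw [Matrix.trace_smul, smul_eq_mul] at this
    exact (mul_eq_right₀ htr).mp this.symm
  have hEg : E * g = 1 := Units.ext (by rw [hc, hc1, one_smul, Units.val_one])
  rw [eq_inv_of_mul_eq_one_left hEg]
  exact inv_mem g.2

/-- If `E ∈ N(S)` acts as the identity on the codespace, then `E ∈ S`. Consequently,
elements of `N(S)` that are not in `⟨i⟩S` act nontrivially on the codespace: they are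
nontrivial logical operators. -/
theorem normalizer_identity_on_code_mem_stabilizer (n s : ℕ) (hn : 1 ≤ n)
    (S : Subgroup (MatN n)ˣ) (hS : S ≤ PauliGroup n)
    (habel : ∀ a ∈ S, ∀ b ∈ S, a * b = b * a)
    (hneg : (-1 : (MatN n)ˣ) ∉ S)
    (hcard : Nat.card ↥S = 2 ^ s) :
    (∀ E ∈ PauliGroup n, (∀ g ∈ S, E * g = g * E) →
      (∀ ψ ∈ codespace n S, (E : MatN n) *ᵥ ψ = ψ) → E ∈ S) ∧
    (∀ E ∈ PauliGroup n, (∀ g ∈ S, E * g = g * E) →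
      (E : MatN n) ∉ phaseStab n S →
      ∃ ψ ∈ codespace n S, (E : MatN n) *ᵥ ψ ≠ ψ) := by
  have : Finite S := Nat.finite_of_card_ne_zero (by rw [hcard]; positivity)
  have : Fintype S := Fintype.ofFinite S
  refine ⟨fun E hE _ h => mem_of_fixes_codespace hS hneg hE h, fun E hE _ hnot => ?_⟩
  by_contra! h
  exact hnot ⟨0, E, mem_of_fixes_codespace hS hneg hE h, by simp⟩
end
end

section
/- (Parity of merging measurement outcomes.) In the merging setup, if a state vector ψ satisfies (G^M_i).mulVec ψ = ε_i • ψ with ε_i ∈ {1, −1} for every i = 1, ..., N, then (P_L^A * P_L^B).mulVec ψ = (∏_{i=1}^N ε_i) • ψ; i.e., the parity of the measurement outcomes of the merging operators yields the eigenvalue of the joint logical operator P_L^A ⊗ P_L^B. -/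
/-!
In the product `G^M_1 ⋯ G^M_N` every ancilla operator `Z_{c_k}` with `0 < k < N` occurs exactly
twice, in `G^M_k` and in `G^M_{k+1}`. Operators on different qubits commute (`actQ_commute`) and
`Z ^ 2 = 1` (`actQ_PZ_sq`), so these factors telescope to `Z_{c_N} Z_{c_0} = 1`, and moving the
remaining factors past each other gives `P_L^A P_L^B` (`prod_telescope`). A common eigenvector of
the factors is an eigenvector of the product, with the product of the eigenvalues
(`prod_mulVec_eigen`).
-/

open Matrix Complex
open scoped Classical

noncomputable section

/-- The Pauli matrix `Y`. -/
def PY : Matrix (Fin 2) (Fin 2) ℂ := !![0, -Complex.I; Complex.I, 0]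

/-- The Pauli `Z` operator on the `k`-th ancilla `c_k` (with 1-based index `k = 1, ..., N-1`),
with the conventions `Z_{c_0} = 1` and `Z_{c_N} = 1`. -/
def ancZ (Q : Type*) [Fintype Q] [DecidableEq Q] (N : ℕ) (c : Fin (N - 1) → Q) (k : ℕ) :
    Matrix (Q → Fin 2) (Q → Fin 2) ℂ :=
  if h : 0 < k ∧ k < N then actQ (c ⟨k - 1, by omega⟩) PZ else 1

/-- The merging operator `G^M_i = P^A_i * P^B_i * Z_{c_i} * Z_{c_{i-1}}` (1-based index
`i = i₀ + 1` for `i₀ : Fin N`). -/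
def mergeOp (Q : Type*) [Fintype Q] [DecidableEq Q] (N : ℕ) (qA qB : Fin N → Q)
    (c : Fin (N - 1) → Q) (PA PB : Fin N → Matrix (Fin 2) (Fin 2) ℂ) (i : Fin N) :
    Matrix (Q → Fin 2) (Q → Fin 2) ℂ :=
  actQ (qA i) (PA i) * actQ (qB i) (PB i) * ancZ Q N c (i.val + 1) * ancZ Q N c i.val

/-- The product of two operators on different qubits: the only intermediate basis state that
contributes to the entry `(v, w)` is `v` with its `q`-th bit replaced by that of `w`. -/
lemma actQ_mul_apply_s17 {Q : Type*} [Fintype Q] [DecidableEq Q] {p q : Q} (h : q ≠ p)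
    (M N : Matrix (Fin 2) (Fin 2) ℂ) (v w : Q → Fin 2) :
    (actQ q M * actQ p N) v w = M (v q) (w q) * N (v p) (w p) *
      (if ∀ k, k ≠ q → k ≠ p → v k = w k then 1 else 0) := by
  rw [Matrix.mul_apply, Finset.sum_eq_single (Function.update v q (w q))]
  · have h1 : ∀ k, k ≠ q → v k = Function.update v q (w q) k := fun k hk => by simp [hk]
    have h2 : (∀ k, k ≠ p → Function.update v q (w q) k = w k) ↔
        ∀ k, k ≠ q → k ≠ p → v k = w k := by
      refine forall_congr' fun k => ?_
      by_cases hk : k = q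
      · subst hk; simp
      · simp [hk]
    unfold actQ
    rw [if_pos h1]
    simp only [h2, Function.update_self, Function.update_of_ne h.symm]
    ring
  · intro u _ hu
    by_cases h1 : ∀ k, k ≠ q → v k = u k
    · have h2 : ¬ ∀ k, k ≠ p → u k = w k := by
        intro h2
        apply hu
        funext k
        by_cases hk : k = q
        · subst hk; simp [h2 k h]
        · simp [hk, h1 k hk]
      simp only [actQ, if_neg h2, mul_zero]
    · simp only [actQ, if_neg h1, mul_zero, zero_mul]
  · simp

lemma actQ_commute {Q : Type*} [Fintype Q] [DecidableEq Q] {p q : Q} (h : q ≠ p)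
    (M N : Matrix (Fin 2) (Fin 2) ℂ) : Commute (actQ q M) (actQ p N) := by
  ext v w
  rw [actQ_mul_apply_s17 h, actQ_mul_apply_s17 h.symm, mul_comm (M _ _)]
  congr 2
  exact propext (forall_congr' fun k => ⟨fun h a b => h b a, fun h a b => h b a⟩)

lemma actQ_PZ_eq_diagonal {Q : Type*} [Fintype Q] [DecidableEq Q] (q : Q) :
    actQ q PZ = Matrix.diagonal fun v : Q → Fin 2 => PZ (v q) (v q) := by
  ext v w
  by_cases hvw : v = w
  · subst hvw; simp [actQ]
  · rw [Matrix.diagonal_apply_ne _ hvw]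
    by_cases h1 : ∀ k, k ≠ q → v k = w k
    · have hq : v q ≠ w q := fun hq => hvw (funext fun k => by
        by_cases hk : k = q
        · subst hk; exact hq
        · exact h1 k hk)
      have hz : ∀ x y : Fin 2, x ≠ y → PZ x y = 0 := by
        intro x y hxy
        fin_cases x <;> fin_cases y <;> simp_all [PZ]
      simp only [actQ, hz _ _ hq, zero_mul]
    · simp only [actQ, if_neg h1, mul_zero]

lemma actQ_PZ_sq {Q : Type*} [Fintype Q] [DecidableEq Q] (q : Q) :
    actQ q PZ * actQ q PZ = 1 := by
  rw [actQ_PZ_eq_diagonal, Matrix.diagonal_mul_diagonal, ← Matrix.diagonal_one]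
  congr 1
  funext v
  have hz : ∀ x : Fin 2, PZ x x * PZ x x = 1 := by
    intro x
    fin_cases x <;> simp [PZ]
  exact hz _

/-- Telescoping in a monoid. The `a i` need not commute with one another, nor the `b i`: their
order is preserved. -/
lemma prod_telescope {M : Type*} [Monoid M] (z : ℕ → M) (hzz : ∀ k, z k * z k = 1)
    (hz : ∀ k l, Commute (z k) (z l)) (n : ℕ) (a b : Fin n → M)
    (hab : ∀ i j, Commute (a i) (b j)) (hza : ∀ k i, Commute (z k) (a i))
    (hzb : ∀ k i, Commute (z k) (b i)) :
    (List.ofFn fun i : Fin n => a i * b i * z (i.val + 1) * z i.val).prod =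
      (List.ofFn a).prod * (List.ofFn b).prod * (z n * z 0) := by
  induction n with
  | zero => simp [hzz]
  | succ n ih =>
    rw [List.ofFn_succ', List.ofFn_succ' (f := a), List.ofFn_succ' (f := b)]
    simp only [List.prod_concat, Fin.val_castSucc, Fin.val_last]
    rw [ih (fun i => a i.castSucc) (fun i => b i.castSucc) (fun i j => hab _ _)
      (fun k i => hza _ _) (fun k i => hzb _ _)]
    set A := (List.ofFn fun i : Fin n => a i.castSucc).prod
    set B := (List.ofFn fun i : Fin n => b i.castSucc).prod
    set x := a (Fin.last n)
    set y := b (Fin.last n)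
    have hxB : Commute x B := by
      apply Commute.list_prod_right
      intro m hm
      obtain ⟨i, rfl⟩ := (List.mem_ofFn' _ _).1 hm
      exact hab _ _
    have hzxy : Commute (z n * z 0) (x * y) :=
      ((hza _ _).mul_left (hza _ _)).mul_right ((hzb _ _).mul_left (hzb _ _))
    have hlast : z n * z 0 * (z (n + 1) * z n) = z (n + 1) * z 0 := by
      rw [(hz n 0).eq, (hz (n + 1) n).eq, mul_assoc, ← mul_assoc (z n), hzz, one_mul,
        (hz 0 (n + 1)).eq]
    calc A * B * (z n * z 0) * (x * y * z (n + 1) * z n)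
        = A * B * ((z n * z 0) * (x * y)) * (z (n + 1) * z n) := by simp only [mul_assoc]
      _ = A * (B * x) * y * (z n * z 0 * (z (n + 1) * z n)) := by
          rw [hzxy.eq]; simp only [mul_assoc]
      _ = A * x * (B * y) * (z (n + 1) * z 0) := by
          rw [hlast, ← hxB.eq]; simp only [mul_assoc]

lemma prod_mulVec_eigen {ι : Type*} [Fintype ι] [DecidableEq ι] (ψ : ι → ℂ) (n : ℕ)
    (G : Fin n → Matrix ι ι ℂ) (ε : Fin n → ℂ) (h : ∀ i, G i *ᵥ ψ = ε i • ψ) :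
    (List.ofFn G).prod *ᵥ ψ = (∏ i, ε i) • ψ := by
  induction n with
  | zero => simp
  | succ n ih =>
    rw [List.ofFn_succ, List.prod_cons, ← Matrix.mulVec_mulVec,
      ih (fun i => G i.succ) (fun i => ε i.succ) fun i => h _, Matrix.mulVec_smul, h,
      smul_smul, Fin.prod_univ_succ, mul_comm]

/-- Parity of merging measurement outcomes: if `ψ` satisfies `G^M_i ψ = ε_i ψ` with
`ε_i ∈ {1, -1}` for every `i`, then `(P_L^A * P_L^B) ψ = (∏ᵢ ε_i) ψ`, i.e. the parity of
the outcomes yields the eigenvalue of the joint logical operator. -/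
theorem mergeOp_outcome_parity (Q : Type*) [Fintype Q] [DecidableEq Q]
    (N : ℕ) (hN : 1 ≤ N) (qA qB : Fin N → Q) (c : Fin (N - 1) → Q)
    (hqA : Function.Injective qA) (hqB : Function.Injective qB)
    (hc : Function.Injective c)
    (hAB : ∀ i j, qA i ≠ qB j) (hAc : ∀ i k, qA i ≠ c k) (hBc : ∀ i k, qB i ≠ c k)
    (PA PB : Fin N → Matrix (Fin 2) (Fin 2) ℂ)
    (hPA : ∀ i, PA i = PX ∨ PA i = PY ∨ PA i = PZ)
    (hPB : ∀ i, PB i = PX ∨ PB i = PY ∨ PB i = PZ)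
    (ψ : (Q → Fin 2) → ℂ) (ε : Fin N → ℂ)
    (hε : ∀ i, ε i = 1 ∨ ε i = -1)
    (hψ : ∀ i, mergeOp Q N qA qB c PA PB i *ᵥ ψ = ε i • ψ) :
    ((List.ofFn fun i => actQ (qA i) (PA i)).prod *
        (List.ofFn fun i => actQ (qB i) (PB i)).prod) *ᵥ ψ =
      (∏ i, ε i) • ψ := by
  have hzcomm : ∀ (k : ℕ) (q : Q) (M : Matrix (Fin 2) (Fin 2) ℂ), (∀ l, q ≠ c l) →
      Commute (ancZ Q N c k) (actQ q M) := by
    intro k q M hq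
    unfold ancZ
    split_ifs
    · exact actQ_commute (hq _).symm _ _
    · exact Commute.one_left _
  have hzz : ∀ k, ancZ Q N c k * ancZ Q N c k = 1 := by
    intro k
    unfold ancZ
    split_ifs
    · exact actQ_PZ_sq _
    · exact one_mul 1
  have hz : ∀ k l, Commute (ancZ Q N c k) (ancZ Q N c l) := by
    intro k l
    unfold ancZ
    split_ifs
    · simp only [actQ_PZ_eq_diagonal]
      exact Matrix.commute_diagonal _ _
    · exact Commute.one_right _
    · exact Commute.one_left _
    · exact Commute.one_left _
  have h := prod_telescope (ancZ Q N c) hzz hz N (fun i => actQ (qA i) (PA i))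
    (fun i => actQ (qB i) (PB i)) (fun i j => actQ_commute (hAB i j) _ _)
    (fun k i => hzcomm k _ _ (hAc i)) (fun k i => hzcomm k _ _ (hBc i))
  -- the boundary conventions `Z_{c_N} = Z_{c_0} = 1`
  have hends : ancZ Q N c N * ancZ Q N c 0 = 1 := by simp [ancZ]
  rw [hends, mul_one] at h
  rw [← h]
  exact prod_mulVec_eigen ψ N _ ε hψ
end
end
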